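/- For every prime p with p ≡ 3 (mod 4), the sum Σ_{n=1}^{⌊2p/5⌋} (n/p) is nonnegative. -/

import Mathlib

/-!
Write `χ` for the Legendre symbol modulo `p`. For `p ≡ 3 (mod 4)` the Fourier expansion of the
sawtooth function, twisted by `χ`, gives
`π ∑_{n ≤ αp} χ(n) = √p ∑_{n ≥ 1} χ(n) (1 - cos (2πnα)) / n`.
At `α = 2/5` the Gauss sum modulo `5` gives `1 - cos (4πn/5) = (5 χ₅(n)² + √5 χ₅(n)) / 4`, so the
right-hand side is a nonnegative combination of Dirichlet series of real completely multiplicative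
functions bounded by `1`. Such series are nonnegative for `s > 1` by their Euler products, and the
sum on the right is read as the limit `s → 1⁺`. For this the sawtooth function has to be identified
with the value at `s = 1` of the entire function `∑ sin (2πnx) / nˢ`, which follows from
`∑ wⁿ / n = -log (1 - w)`, obtained as a Mellin transform at `s = 1`.

The sign of the Gauss sum matters, and comes from Gauss's product
`∏_{k ≤ m} ζ^(km) (1 - ζ^k)`, `p = 2m + 1`. Its square equals that of the Gauss sum, and at
`ζ = e^(2πi/p)` it is a power of `i` times a product of positive sines. If the two differed by a
sign, the `p`-th cyclotomic polynomial would divide the sum of the two polynomials behind them;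
modulo `p` it is `(X - 1)^(2m)`, whereas that sum vanishes at `1` to order exactly `m`.
-/

open Polynomial Finset
open scoped Nat Real

section EulerOperator

variable (R : Type*) [CommRing R]

/-- The Euler operator `X · d/dX` on polynomials. Its `n`-th power multiplies the coefficient of
`X ^ a` by `a ^ n`, and evaluated at `1` it detects the order of vanishing there. -/
noncomputable def eulerOperator : R[X] →ₗ[R] R[X] :=
  LinearMap.mulLeft R X ∘ₗ derivative

variable {R}

lemma eulerOperator_apply (f : R[X]) : eulerOperator R f = X * derivative f := rfl

lemma eulerOperator_pow_X_pow (n a : ℕ) :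
    (eulerOperator R ^ n) (X ^ a) = (a : R) ^ n • X ^ a := by
  have step : eulerOperator R (X ^ a) = (a : R) • X ^ a := by
    rcases a with _ | a
    · simp [eulerOperator_apply]
    · simp only [eulerOperator_apply, derivative_X_pow, smul_eq_C_mul, Nat.add_sub_cancel]
      ring
  induction n with
  | zero => simp
  | succ n ih => rw [pow_succ', Module.End.mul_apply, ih, map_smul, step, smul_smul, pow_succ]

lemma eval_one_eulerOperator_pow_X_sub_one_pow_mul (n : ℕ) (f : R[X]) :
    ((eulerOperator R ^ n) ((X - 1) ^ n * f)).eval 1 = n ! * f.eval 1 := by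
  induction n generalizing f with
  | zero => simp
  | succ n ih =>
    have step : eulerOperator R ((X - 1) ^ (n + 1) * f) =
        (X - 1) ^ n * (((n + 1 : ℕ) : R[X]) * X * f + (X - 1) * X * derivative f) := by
      rw [eulerOperator_apply, derivative_mul, derivative_pow, derivative_sub, derivative_X,
        derivative_one, Nat.add_sub_cancel, map_natCast]
      ring
    rw [pow_succ, Module.End.mul_apply, step, ih]
    simp only [eval_add, eval_mul, eval_sub, eval_natCast, eval_X, eval_one, Nat.factorial_succ]
    push_cast
    ring

end EulerOperator

section GaussProduct

lemma prod_range_two_mul_eq_prod_pairs {M : Type*} [CommMonoid M] (m : ℕ) (f : ℕ → M) :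
    ∏ k ∈ range (2 * m), f (k + 1) = ∏ k ∈ range m, f (k + 1) * f (2 * m - k) := by
  rw [two_mul, prod_range_add, prod_mul_distrib, ← prod_range_reflect (fun k ↦ f (m + k + 1))]
  congr 1
  refine prod_congr rfl fun k hk ↦ ?_
  congr 1
  have := mem_range.1 hk
  omega

/-- Gauss's product `∏ₖ x ^ (k m) (1 - x ^ k)`, `1 ≤ k ≤ m`. At a primitive `p`-th root of unity
with `p = 2 m + 1` prime it equals the quadratic Gauss sum. -/
def gaussProduct {R : Type*} [CommRing R] (m : ℕ) (x : R) : R :=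
  ∏ k ∈ range m, x ^ ((k + 1) * m) * (1 - x ^ (k + 1))

lemma map_gaussProduct {R S F : Type*} [CommRing R] [CommRing S] [FunLike F R S]
    [RingHomClass F R S] (f : F) (m : ℕ) (x : R) : f (gaussProduct m x) = gaussProduct m (f x) := by
  simp [gaussProduct]

lemma gaussProduct_X (R : Type*) [CommRing R] (m : ℕ) :
    gaussProduct m (X : R[X]) =
      (X - 1) ^ m * ∏ k ∈ range m, -(X ^ ((k + 1) * m) * ∑ i ∈ range (k + 1), X ^ i) := by
  nth_rw 2 [← card_range m]
  rw [gaussProduct, ← prod_const, ← prod_mul_distrib]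
  refine prod_congr rfl fun k _ ↦ ?_
  linear_combination X ^ ((k + 1) * m) * geom_sum_mul (X : R[X]) (k + 1)

lemma eval_one_eulerOperator_pow_gaussProduct (R : Type*) [CommRing R] (m : ℕ) :
    ((eulerOperator R ^ m) (gaussProduct m X)).eval 1 = (-1) ^ m * (m ! : R) ^ 2 := by
  rw [gaussProduct_X, eval_one_eulerOperator_pow_X_sub_one_pow_mul, eval_prod, prod_congr rfl
    (g := fun k : ℕ ↦ -((k + 1 : ℕ) : R)) fun k _ ↦ by simp [eval_geom_sum], prod_neg, card_range,
    ← Nat.cast_prod, prod_range_add_one_eq_factorial]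
  ring

lemma gaussProduct_sq {R : Type*} [CommRing R] [IsDomain R] {m : ℕ} {ζ : R}
    (hζ : IsPrimitiveRoot ζ (2 * m + 1)) :
    gaussProduct m ζ ^ 2 = (-1) ^ m * (2 * m + 1) := by
  have factor_sq : ∀ k ∈ range m, (ζ ^ ((k + 1) * m) * (1 - ζ ^ (k + 1))) ^ 2 =
      -((1 - ζ ^ (k + 1)) * (1 - ζ ^ (2 * m - k))) := by
    intro k hk
    have inv_pow : ζ ^ (k + 1) * ζ ^ (2 * m - k) = 1 := by
      rw [← pow_add, ← hζ.pow_eq_one]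
      congr 1
      have := mem_range.1 hk
      omega
    have sq_mul : (ζ ^ ((k + 1) * m)) ^ 2 * ζ ^ (k + 1) = 1 := by
      rw [← pow_mul, ← pow_add, show (k + 1) * m * 2 + (k + 1) = (2 * m + 1) * (k + 1) by ring,
        pow_mul, hζ.pow_eq_one, one_pow]
    linear_combination (1 - (ζ ^ ((k + 1) * m)) ^ 2) * inv_pow +
      (ζ ^ (2 * m - k) - 2 + ζ ^ (k + 1)) * sq_mul
  rw [gaussProduct, ← prod_pow, prod_congr rfl factor_sq, prod_neg, card_range,
    ← prod_range_two_mul_eq_prod_pairs m fun k ↦ 1 - ζ ^ k, hζ.prod_one_sub_pow_eq_order]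
  push_cast
  rfl

lemma factorial_half_sq {p m : ℕ} [Fact p.Prime] (hm : p = 2 * m + 1) :
    (m ! : ZMod p) ^ 2 = (-1) ^ (m + 1) := by
  have order : (2 * m + 1 : ZMod p) = 0 := by
    exact_mod_cast (ZMod.natCast_eq_zero_iff (2 * m + 1) p).2 hm.dvd
  have factorial_eq : ((p - 1)! : ZMod p) = (-1) ^ m * (m ! : ZMod p) ^ 2 := by
    have factor_eq : ∀ k ∈ range m,
        (((k + 1) * (2 * m - k) : ℕ) : ZMod p) = -((k + 1 : ℕ) : ZMod p) ^ 2 := by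
      intro k hk
      rw [Nat.cast_mul, Nat.cast_sub (by have := mem_range.1 hk; omega)]
      push_cast
      linear_combination (k + 1 : ZMod p) * order
    rw [show p - 1 = 2 * m by omega, ← prod_range_add_one_eq_factorial,
      prod_range_two_mul_eq_prod_pairs m fun k ↦ k, Nat.cast_prod, prod_congr rfl factor_eq,
      prod_neg, card_range, prod_pow, ← Nat.cast_prod, prod_range_add_one_eq_factorial]
  rw [ZMod.wilsons_lemma] at factorial_eq
  have sign_sq : ((-1 : ZMod p) ^ m) ^ 2 = 1 := by rw [← pow_mul, mul_comm, pow_mul]; simp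
  linear_combination -(-1) ^ m * factorial_eq - (m ! : ZMod p) ^ 2 * sign_sq

end GaussProduct

section GaussSumSign

open Complex

lemma exp_pow_mul_one_sub_exp_pow (m k : ℕ) :
    cexp (2 * π * I / (2 * m + 1)) ^ ((k + 1) * m) *
        (1 - cexp (2 * π * I / (2 * m + 1)) ^ (k + 1)) =
      I ^ (2 * k + 1) * (2 * Real.sin (π * (k + 1) / (2 * m + 1)) : ℝ) := by
  have order_ne_zero : (2 * m + 1 : ℂ) ≠ 0 := by exact_mod_cast (2 * m).succ_ne_zero
  set z : ℂ := π * (k + 1) / (2 * m + 1) with hz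
  have half_turn : cexp (z * I) ^ (2 * m + 1) = (-1) ^ (k + 1) := by
    rw [← exp_pi_mul_I, ← Complex.exp_nat_mul, ← Complex.exp_nat_mul, hz]
    congr 1
    push_cast
    field_simp
  have inv : cexp (z * I) * cexp (-(z * I)) = 1 := by rw [← Complex.exp_add]; simp
  have root_pow : cexp (2 * π * I / (2 * m + 1)) ^ (k + 1) = cexp (z * I) ^ 2 := by
    rw [← Complex.exp_nat_mul, ← Complex.exp_nat_mul, hz]
    congr 1
    push_cast
    field_simp
  have sin_eq : ((2 * Real.sin (π * (k + 1) / (2 * m + 1)) : ℝ) : ℂ) =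
      (cexp (-(z * I)) - cexp (z * I)) * I := by
    rw [hz]
    push_cast
    rw [Complex.two_sin, neg_mul]
  rw [pow_succ] at half_turn
  rw [pow_mul, root_pow, sin_eq, pow_succ I, pow_mul I, I_sq, ← pow_mul]
  linear_combination (cexp (-(z * I)) - cexp (z * I)) * half_turn -
    cexp (z * I) ^ (2 * m) * inv - (-1) ^ k * (cexp (-(z * I)) - cexp (z * I)) * I_sq

lemma sum_range_two_mul_add_one (m : ℕ) : ∑ k ∈ range m, (2 * k + 1) = m ^ 2 := by
  induction m with
  | zero => rfl
  | succ m ih => rw [sum_range_succ, ih]; ring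

lemma gaussProduct_exp (m : ℕ) :
    gaussProduct m (cexp (2 * π * I / (2 * m + 1))) = I ^ (m ^ 2) * √(2 * m + 1) := by
  set P : ℝ := ∏ k ∈ range m, 2 * Real.sin (π * (k + 1) / (2 * m + 1)) with hP
  have prod_eq : gaussProduct m (cexp (2 * π * I / (2 * m + 1))) = I ^ (m ^ 2) * P := by
    rw [gaussProduct, prod_congr rfl fun k _ ↦ exp_pow_mul_one_sub_exp_pow m k, prod_mul_distrib,
      prod_pow_eq_pow_sum, sum_range_two_mul_add_one, hP, ofReal_prod]
  have P_pos : 0 < P := prod_pos fun k hk ↦ by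
    have hk : (k + 1 : ℝ) < 2 * m + 1 := by
      exact_mod_cast (by have := mem_range.1 hk; omega : k + 1 < 2 * m + 1)
    refine mul_pos two_pos (Real.sin_pos_of_pos_of_lt_pi (by positivity) ?_)
    rw [div_lt_iff₀ (by positivity)]
    gcongr
  have P_sq : P ^ 2 = 2 * m + 1 := by
    have root : IsPrimitiveRoot (cexp (2 * π * I / (2 * m + 1))) (2 * m + 1) := by
      simpa using Complex.isPrimitiveRoot_exp (2 * m + 1) (by omega)
    have gauss_sq := gaussProduct_sq root
    have sign : (I ^ m ^ 2) ^ 2 = (-1) ^ m := by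
      rw [← pow_mul, mul_comm, pow_mul, I_sq]
      rcases m.even_or_odd with h | h
      · rw [h.neg_one_pow, (h.pow_of_ne_zero two_ne_zero).neg_one_pow]
      · rw [h.neg_one_pow, h.pow.neg_one_pow]
    rw [prod_eq, mul_pow, sign] at gauss_sq
    exact_mod_cast mul_left_cancel₀ (by simp) gauss_sq
  rw [prod_eq, ← P_sq, Real.sqrt_sq P_pos.le]

end GaussSumSign

section GaussSum

variable (p : ℕ) [Fact p.Prime]

/-- The Legendre symbol modulo `p` as a multiplicative character with values in `R`. -/
noncomputable def legendreChar (R : Type*) [CommRing R] : MulChar (ZMod p) R :=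
  (quadraticChar (ZMod p)).ringHomComp (Int.castRingHom R)

/-- The Fekete polynomial `∑ₐ (a/p) X ^ a`, `0 ≤ a < p`, whose value at a `p`-th root of unity is
a quadratic Gauss sum. -/
noncomputable def feketePolynomial : ℤ[X] :=
  ∑ a : ZMod p, C (quadraticChar (ZMod p) a) * X ^ a.val

variable {p}

lemma legendreChar_apply (R : Type*) [CommRing R] (a : ZMod p) :
    legendreChar p R a = (quadraticChar (ZMod p) a : R) := rfl

lemma legendreChar_natCast (R : Type*) [CommRing R] (n : ℕ) :
    legendreChar p R n = legendreSym p n := by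
  rw [legendreChar_apply, legendreSym, Int.cast_natCast]

lemma isQuadratic_legendreChar (R : Type*) [CommRing R] : (legendreChar p R).IsQuadratic :=
  (quadraticChar_isQuadratic _).comp _

lemma aeval_feketePolynomial {R : Type*} [CommRing R] {ζ : R} (hζ : ζ ^ p = 1) :
    aeval ζ (feketePolynomial p) = gaussSum (legendreChar p R) (AddChar.zmodChar p hζ) := by
  simp [feketePolynomial, gaussSum, legendreChar_apply, AddChar.zmodChar_apply]

lemma ringChar_zmod_ne_two (hp : p ≠ 2) : ringChar (ZMod p) ≠ 2 :=
  (ZMod.ringChar_zmod_n p).trans_ne hp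

lemma legendreChar_ne_one (K : Type*) [Field K] [CharZero K] (hp : p ≠ 2) :
    legendreChar p K ≠ 1 :=
  (MulChar.ringHomComp_ne_one_iff Int.cast_injective).2
    (quadraticChar_ne_one (ringChar_zmod_ne_two hp))

lemma eval_one_eulerOperator_pow_feketePolynomial {m : ℕ} (hm : p = 2 * m + 1) :
    ((eulerOperator (ZMod p) ^ m) ((feketePolynomial p).map (Int.castRingHom (ZMod p)))).eval 1 =
      -1 := by
  have term_eq (a : ZMod p) :
      (quadraticChar (ZMod p) a : ZMod p) * a ^ m = 1 - if a = 0 then 1 else 0 := by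
    split_ifs with ha
    · simp [ha]
    · have euler := quadraticChar_eq_pow_of_char_ne_two' (ringChar_zmod_ne_two (by omega)) a
      rw [ZMod.card, show p / 2 = m by omega] at euler
      rw [← euler, ← sq, sub_zero]
      exact_mod_cast congrArg (Int.cast : ℤ → ZMod p) (quadraticChar_sq_one ha)
  have term_eval (a : ZMod p) : ((eulerOperator (ZMod p) ^ m)
      ((C (quadraticChar (ZMod p) a) * X ^ a.val).map (Int.castRingHom (ZMod p)))).eval 1 =
        1 - if a = 0 then 1 else 0 := by
    rw [Polynomial.map_mul, map_C, Polynomial.map_pow, map_X, ← smul_eq_C_mul, map_smul,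
      eulerOperator_pow_X_pow, ← term_eq]
    simp
  rw [feketePolynomial, Polynomial.map_sum, map_sum, eval_finsetSum,
    sum_congr rfl fun a _ ↦ term_eval a]
  simp

lemma not_cyclotomic_dvd_feketePolynomial_add_gaussProduct {m : ℕ} (hm : p = 2 * m + 1) :
    ¬ cyclotomic p ℤ ∣ feketePolynomial p + gaussProduct m X := by
  intro h
  have cyclotomic_eq : cyclotomic p (ZMod p) = (X - 1) ^ m * (X - 1) ^ m := by
    simpa [← pow_add, show p - 1 = m + m by omega] using
      cyclotomic_mul_prime_eq_pow_of_not_dvd (ZMod p) (Fact.out : p.Prime).not_dvd_one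
  obtain ⟨g, hg⟩ := Polynomial.map_dvd (Int.castRingHom (ZMod p)) h
  rw [map_cyclotomic, cyclotomic_eq, mul_assoc, Polynomial.map_add, ← coe_mapRingHom,
    map_gaussProduct, coe_mapRingHom, map_X] at hg
  have eval_eq := congrArg (fun f ↦ ((eulerOperator (ZMod p) ^ m) f).eval 1) hg
  have m_ne_zero : m ≠ 0 := by
    rintro rfl
    exact (Fact.out : p.Prime).one_lt.ne' (by simpa using hm)
  simp only [map_add, eval_add, eval_one_eulerOperator_pow_feketePolynomial hm,
    eval_one_eulerOperator_pow_gaussProduct, factorial_half_sq hm,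
    eval_one_eulerOperator_pow_X_sub_one_pow_mul, eval_mul, eval_pow, eval_sub, eval_X, eval_one,
    sub_self, zero_pow m_ne_zero, zero_mul, mul_zero, ← pow_add,
    (show Odd (m + (m + 1)) from ⟨m, by ring⟩).neg_one_pow] at eval_eq
  have two_eq_zero : (2 : ZMod p) = 0 := by linear_combination -eval_eq
  exact Ring.two_ne_zero (ringChar_zmod_ne_two (by omega)) two_eq_zero

lemma gaussSum_legendreChar_sq {K : Type*} [Field K] [CharZero K] {m : ℕ} (hm : p = 2 * m + 1)
    {ψ : AddChar (ZMod p) K} (hψ : ψ.IsPrimitive) :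
    gaussSum (legendreChar p K) ψ ^ 2 = (-1) ^ m * (2 * m + 1) := by
  have apply_neg_one : legendreChar p K (-1) = (-1) ^ m := by
    rw [legendreChar_apply, quadraticChar_neg_one (ringChar_zmod_ne_two (by omega)), ZMod.card,
      ZMod.χ₄_eq_neg_one_pow (by omega), show p / 2 = m by omega]
    simp
  have card_eq : (Fintype.card (ZMod p) : K) = 2 * m + 1 := by
    rw [ZMod.card, hm]
    push_cast
    rfl
  rw [gaussSum_sq (χ := legendreChar p K) (legendreChar_ne_one K (by omega))
    (isQuadratic_legendreChar K) hψ, apply_neg_one, card_eq]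

lemma gaussSum_legendreChar_eq_gaussProduct {K : Type*} [Field K] [CharZero K] {m : ℕ}
    (hm : p = 2 * m + 1) {ζ : K} (hζ : IsPrimitiveRoot ζ p) :
    gaussSum (legendreChar p K) (AddChar.zmodChar p hζ.pow_eq_one) = gaussProduct m ζ := by
  have sq_eq : gaussSum (legendreChar p K) (AddChar.zmodChar p hζ.pow_eq_one) ^ 2 =
      gaussProduct m ζ ^ 2 := by
    rw [gaussProduct_sq (hm ▸ hζ), gaussSum_legendreChar_sq hm
      (AddChar.zmodChar_primitive_of_primitive_root p hζ)]
  refine (sq_eq_sq_iff_eq_or_eq_neg.1 sq_eq).resolve_right fun eq_neg ↦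
    not_cyclotomic_dvd_feketePolynomial_add_gaussProduct hm ?_
  have p_pos : 0 < p := NeZero.pos p
  rw [cyclotomic_eq_minpoly hζ p_pos]
  refine minpoly.isIntegrallyClosed_dvd (hζ.isIntegral p_pos) ?_
  rw [map_add, map_gaussProduct, aeval_X, aeval_feketePolynomial hζ.pow_eq_one, eq_neg,
    neg_add_cancel]

lemma zmodChar_exp_eq_stdAddChar (N : ℕ) [NeZero N] :
    AddChar.zmodChar N (Complex.isPrimitiveRoot_exp N (NeZero.ne N)).pow_eq_one =
      ZMod.stdAddChar := by
  ext a
  rw [AddChar.zmodChar_apply, ← Complex.exp_nat_mul, ZMod.stdAddChar_apply, ZMod.toCircle_apply]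
  congr 1
  ring

theorem gaussSum_legendreChar_stdAddChar (hp : p ≠ 2) :
    gaussSum (legendreChar p ℂ) ZMod.stdAddChar = Complex.I ^ ((p / 2) ^ 2) * √p := by
  obtain ⟨m, hm⟩ : Odd p := (Fact.out : p.Prime).odd_of_ne_two hp
  have order_eq : (p : ℂ) = 2 * m + 1 := by exact_mod_cast congrArg (Nat.cast : ℕ → ℂ) hm
  rw [← zmodChar_exp_eq_stdAddChar, gaussSum_legendreChar_eq_gaussProduct hm
      (Complex.isPrimitiveRoot_exp p (NeZero.ne p)), order_eq,
    gaussProduct_exp, show p / 2 = m by omega]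
  rw [show (2 * m + 1 : ℝ) = p by exact_mod_cast order_eq.symm]

lemma sum_legendreChar_mul_stdAddChar (hp : p ≠ 2) (n : ZMod p) :
    ∑ a, legendreChar p ℂ a * ZMod.stdAddChar (n * a) =
      legendreChar p ℂ n * (Complex.I ^ ((p / 2) ^ 2) * √p) := by
  rw [← gaussSum_legendreChar_stdAddChar hp]
  rcases eq_or_ne n 0 with rfl | hn
  · simp [MulChar.sum_eq_zero_of_ne_one (legendreChar_ne_one ℂ hp), MulChar.map_zero]
  · have := gaussSum_mulShift_eq (legendreChar p ℂ) ZMod.stdAddChar (Units.mk0 n hn)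
    rwa [(isQuadratic_legendreChar ℂ).inv] at this

end GaussSum

section PolylogKernel

open Complex MeasureTheory Filter Set HurwitzZeta
open scoped ComplexConjugate Topology

/-- The generating function `∑ₙ wⁿ e⁻ⁿᵗ = w e⁻ᵗ / (1 - w e⁻ᵗ)`, `n ≥ 1`, whose Mellin transform is
`Γ(s) ∑ₙ wⁿ / nˢ`. -/
noncomputable def polylogKernel (w : ℂ) (t : ℝ) : ℂ :=
  w * rexp (-t) / (1 - w * rexp (-t))

variable {w : ℂ}

lemma re_lt_one_of_norm_le_one (hw : ‖w‖ ≤ 1) (hw1 : w ≠ 1) : w.re < 1 := by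
  refine lt_of_le_of_ne ((re_le_norm w).trans hw) fun hre ↦ hw1 ?_
  have norm_eq : w.re = ‖w‖ := le_antisymm (re_le_norm w) (hre ▸ hw)
  rw [← Complex.ofReal_one, ← hre]
  exact Complex.ext rfl (nonneg_iff.1 (re_eq_norm.1 norm_eq)).2.symm

lemma re_one_sub_mul_exp_neg_pos (hw : ‖w‖ ≤ 1) (hw1 : w ≠ 1) {t : ℝ} (ht : 0 ≤ t) :
    0 < (1 - w * rexp (-t)).re := by
  have exp_le : rexp (-t) ≤ 1 := by simpa
  rw [sub_re, one_re, re_mul_ofReal, sub_pos]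
  nlinarith [re_lt_one_of_norm_le_one hw hw1, Real.exp_pos (-t)]

lemma continuousOn_polylogKernel (hw : ‖w‖ ≤ 1) (hw1 : w ≠ 1) :
    ContinuousOn (polylogKernel w) (Ici 0) := by
  refine ContinuousOn.div (by fun_prop) (by fun_prop) fun t ht h ↦ ?_
  exact (re_one_sub_mul_exp_neg_pos hw hw1 ht).ne' (congrArg re h)

lemma tendsto_mul_exp_neg_atTop (w : ℂ) :
    Tendsto (fun t : ℝ ↦ w * rexp (-t)) atTop (𝓝 0) := by
  simpa using (continuous_ofReal.tendsto' 0 0 ofReal_zero).comp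
    (Real.tendsto_exp_neg_atTop_nhds_zero) |>.const_mul w

lemma polylogKernel_isBigO_exp_neg (w : ℂ) :
    polylogKernel w =O[atTop] fun t ↦ rexp (-1 * t) := by
  have bounded : Tendsto (fun t : ℝ ↦ w / (1 - w * rexp (-t))) atTop (𝓝 (w / (1 - 0))) :=
    tendsto_const_nhds.div (tendsto_const_nhds.sub (tendsto_mul_exp_neg_atTop w)) (by simp)
  have decay : (fun t : ℝ ↦ (rexp (-t) : ℂ)) =O[atTop] fun t ↦ rexp (-t) :=
    Asymptotics.isBigO_of_le _ fun t ↦ by simp [Complex.norm_exp]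
  refine (decay.mul (bounded.isBigO_one ℝ)).congr (fun t ↦ ?_) fun t ↦ ?_
  · rw [polylogKernel]; ring
  · rw [neg_one_mul, mul_one]

lemma differentiableAt_mellin_polylogKernel (hw : ‖w‖ ≤ 1) (hw1 : w ≠ 1) {s : ℂ}
    (hs : 0 < s.re) : DifferentiableAt ℂ (mellin (polylogKernel w)) s := by
  have cont := continuousOn_polylogKernel hw hw1
  refine mellin_differentiableAt_of_isBigO_rpow_exp one_pos
    ((cont.mono Ioi_subset_Ici_self).locallyIntegrableOn measurableSet_Ioi)
    (polylogKernel_isBigO_exp_neg w) ?_ hs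
  simpa using ((cont 0 self_mem_Ici).mono Ioi_subset_Ici_self).tendsto.isBigO_one ℝ

lemma mellin_polylogKernel_one (hw : ‖w‖ ≤ 1) (hw1 : w ≠ 1) :
    mellin (polylogKernel w) 1 = -log (1 - w) := by
  have antideriv : ∀ t ∈ Ici (0 : ℝ),
      HasDerivAt (fun t : ℝ ↦ log (1 - w * rexp (-t))) (polylogKernel w t) t := by
    intro t ht
    have inner : HasDerivAt (fun t : ℝ ↦ 1 - w * rexp (-t)) (w * rexp (-t)) t := by
      simpa using (((hasDerivAt_neg t).exp.ofReal_comp).const_mul w).const_sub 1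
    exact inner.clog_real (.inl (re_one_sub_mul_exp_neg_pos hw hw1 ht))
  have integrable : IntegrableOn (polylogKernel w) (Ioi 0) :=
    (((continuousOn_polylogKernel hw hw1).locallyIntegrableOn measurableSet_Ici
      ).integrableOn_of_isBigO_atTop (polylogKernel_isBigO_exp_neg w)
      ⟨Ioi 0, Ioi_mem_atTop 0, exp_neg_integrableOn_Ioi 0 one_pos⟩).mono_set Ioi_subset_Ici_self
  have limit : Tendsto (fun t : ℝ ↦ log (1 - w * rexp (-t))) atTop (𝓝 0) := by
    have tendsto_one := (tendsto_mul_exp_neg_atTop w).const_sub 1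
    rw [sub_zero] at tendsto_one
    simpa using tendsto_one.clog one_mem_slitPlane
  have := integral_Ioi_of_hasDerivAt_of_tendsto' antideriv integrable limit
  simpa [mellin] using this

lemma hasSum_mellin_polylogKernel (hw : ‖w‖ ≤ 1) {s : ℂ} (hs : 1 < s.re) :
    HasSum (fun n : ℕ ↦ Gamma s * w ^ (n + 1) / ((n + 1 : ℝ) : ℂ) ^ s)
      (mellin (polylogKernel w) s) := by
  refine hasSum_mellin (fun n ↦ .inr (by positivity)) (by linarith) (fun t ht ↦ ?_) ?_
  · have norm_lt : ‖w * rexp (-t)‖ < 1 := by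
      rw [norm_mul, norm_real, Real.norm_of_nonneg (Real.exp_pos _).le]
      have exp_lt : rexp (-t) < 1 := by simpa using ht
      nlinarith [norm_nonneg w, Real.exp_pos (-t)]
    have geometric := (hasSum_geometric_of_norm_lt_one norm_lt).mul_left (w * rexp (-t))
    refine geometric.congr_fun fun n ↦ ?_
    rw [← pow_succ', mul_pow, ← ofReal_pow, ← Real.exp_nat_mul]
    push_cast
    ring_nf
  · refine Summable.of_nonneg_of_le (fun n ↦ by positivity) (fun n ↦ ?_)
      ((summable_nat_add_iff 1).2 (Real.summable_one_div_nat_rpow.2 hs))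
    rw [norm_pow]
    push_cast
    gcongr
    exact pow_le_one₀ (norm_nonneg w) hw

lemma exp_two_pi_mul_I_mul_ne_one {x : ℝ} (hx : (x : UnitAddCircle) ≠ 0) :
    cexp (2 * π * I * x) ≠ 1 := by
  rw [Ne, Complex.exp_eq_one_iff]
  rintro ⟨n, hn⟩
  have x_eq : (x : ℂ) = n := mul_left_cancel₀ two_pi_I_ne_zero (hn.trans (mul_comm _ _))
  refine hx ((AddCircle.coe_eq_zero_iff 1).2 ⟨n, ?_⟩)
  simpa using (show x = n by exact_mod_cast x_eq).symm

lemma norm_exp_two_pi_mul_I_mul (x : ℝ) : ‖cexp (2 * π * I * x)‖ = 1 := by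
  convert norm_exp_ofReal_mul_I (2 * π * x) using 3
  push_cast
  ring

lemma Gamma_mul_expZeta (x : ℝ) {s : ℂ} (hs : 1 < s.re) :
    Gamma s * expZeta x s = mellin (polylogKernel (cexp (2 * π * I * x))) s := by
  have dirichlet := (hasSum_expZeta_of_one_lt_re x hs).mul_left (Gamma s)
  have s_ne : s ≠ 0 := fun h ↦ by norm_num [h] at hs
  rw [← hasSum_nat_add_iff' 1, sum_range_one, Nat.cast_zero, zero_cpow s_ne, div_zero, mul_zero,
    sub_zero] at dirichlet
  refine (dirichlet.congr_fun fun n ↦ ?_).unique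
    (hasSum_mellin_polylogKernel (norm_exp_two_pi_mul_I_mul x).le hs)
  rw [← Complex.exp_nat_mul, mul_div_assoc]
  push_cast
  ring_nf

lemma expZeta_one {x : ℝ} (hx : (x : UnitAddCircle) ≠ 0) :
    expZeta x 1 = -log (1 - cexp (2 * π * I * x)) := by
  have norm_le := (norm_exp_two_pi_mul_I_mul x).le
  have ne_one := exp_two_pi_mul_I_mul_ne_one hx
  have approach : Tendsto (fun s : ℝ ↦ (s : ℂ)) (𝓝[>] 1) (𝓝 1) :=
    (continuous_ofReal.tendsto' 1 1 ofReal_one).mono_left nhdsWithin_le_nhds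
  have expZeta_limit : Tendsto (fun s : ℝ ↦ Gamma s * expZeta x s) (𝓝[>] 1)
      (𝓝 (Gamma 1 * expZeta x 1)) :=
    ((differentiableAt_Gamma_one.continuousAt.mul
      (differentiableAt_expZeta x 1 (.inr hx)).continuousAt).tendsto).comp approach
  have mellin_limit : Tendsto (fun s : ℝ ↦ Gamma s * expZeta x s) (𝓝[>] 1)
      (𝓝 (mellin (polylogKernel (cexp (2 * π * I * x))) 1)) := by
    refine ((differentiableAt_mellin_polylogKernel norm_le ne_one (by simp)
      ).continuousAt.tendsto.comp approach).congr' ?_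
    filter_upwards [self_mem_nhdsWithin] with s hs
    exact (Gamma_mul_expZeta x (by simpa using hs)).symm
  rw [← mellin_polylogKernel_one norm_le ne_one, ← tendsto_nhds_unique expZeta_limit mellin_limit,
    Gamma_one, one_mul]

lemma one_sub_exp_two_pi_mul_I_mul (x : ℝ) :
    1 - cexp (2 * π * I * x) =
      (2 * Real.sin (π * x) : ℝ) *
        (cos (π * (x - 1 / 2) : ℝ) + sin (π * (x - 1 / 2) : ℝ) * I) := by
  have double_angle : (2 * π * I * x : ℂ) = 2 * (π * x : ℝ) * I := by push_cast; ring
  have shift : (π * (x - 1 / 2) : ℝ) = π * x - π / 2 := by ring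
  rw [double_angle, exp_mul_I, cos_two_mul, sin_two_mul, shift, ← ofReal_cos, ← ofReal_sin,
    ← ofReal_cos, ← ofReal_sin, Real.cos_sub_pi_div_two, Real.sin_sub_pi_div_two]
  have pythagoras : (Real.sin (π * x) : ℂ) ^ 2 + (Real.cos (π * x) : ℂ) ^ 2 = 1 := by
    exact_mod_cast Real.sin_sq_add_cos_sq (π * x)
  push_cast at pythagoras ⊢
  linear_combination -2 * pythagoras

lemma arg_one_sub_exp_two_pi_mul_I_mul {x : ℝ} (h0 : 0 < x) (h1 : x < 1) :
    arg (1 - cexp (2 * π * I * x)) = π * (x - 1 / 2) := by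
  have sin_pos : 0 < Real.sin (π * x) :=
    Real.sin_pos_of_pos_of_lt_pi (by positivity) (by nlinarith [Real.pi_pos])
  rw [one_sub_exp_two_pi_mul_I_mul, arg_mul_cos_add_sin_mul_I (by positivity)]
  constructor <;> nlinarith [Real.pi_pos]

lemma sinZeta_one {x : ℝ} (h0 : 0 < x) (h1 : x < 1) : sinZeta x 1 = (π * (1 / 2 - x) : ℝ) := by
  have x_ne : (x : UnitAddCircle) ≠ 0 := by
    rw [Ne, AddCircle.coe_eq_zero_iff_of_mem_Ico (by exact ⟨h0.le, by simpa⟩)]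
    exact h0.ne'
  have arg_eq := arg_one_sub_exp_two_pi_mul_I_mul h0 h1
  have arg_ne_pi : arg (1 - cexp (2 * π * I * x)) ≠ π := by
    rw [arg_eq]
    nlinarith [Real.pi_pos]
  have conj_eq : 1 - cexp (2 * π * I * (-x : ℝ)) = conj (1 - cexp (2 * π * I * x)) := by
    simp [← exp_conj, conj_ofReal, Complex.conj_ofNat]
  have log_im_eq : (log (1 - cexp (2 * π * I * x))).im = π * (x - 1 / 2) := by
    rw [log_im, arg_eq]
  rw [sinZeta_eq, ← AddCircle.coe_neg, expZeta_one x_ne, expZeta_one (by simpa using x_ne), conj_eq,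
    log_conj _ arg_ne_pi, neg_sub_neg, ← neg_sub, sub_conj, log_im_eq]
  push_cast
  field_simp
  ring

end PolylogKernel

section FourierCriterion

open Filter HurwitzZeta
open scoped Topology

lemma hasSum_re_sinZeta (x : ℝ) {s : ℝ} (hs : 1 < s) :
    HasSum (fun n : ℕ ↦ Real.sin (2 * π * x * n) / (n : ℝ) ^ s) (sinZeta x s).re := by
  refine (Complex.hasSum_re (hasSum_nat_sinZeta x (s := s) (by simpa))).congr_fun fun n ↦ ?_
  rw [← Complex.ofReal_natCast, ← Complex.ofReal_cpow n.cast_nonneg, ← Complex.ofReal_div,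
    Complex.ofReal_re]

lemma tendsto_re_sinZeta_one (x : ℝ) :
    Tendsto (fun s : ℝ ↦ (sinZeta x s).re) (𝓝[>] 1) (𝓝 (sinZeta x 1).re) := by
  have continuous_re : Continuous fun s : ℝ ↦ (sinZeta x s).re :=
    Complex.continuous_re.comp ((differentiableAt_sinZeta x).continuous.comp
      Complex.continuous_ofReal)
  simpa using (continuous_re.tendsto 1).mono_left nhdsWithin_le_nhds

lemma sinZeta_one_sub_sinZeta_one {x α : ℝ} (hx0 : 0 < x) (hx1 : x < 1) (hα0 : 0 ≤ α)
    (hα1 : α < 1) (hne : x ≠ α) :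
    (sinZeta x 1).re - (sinZeta (x - α : ℝ) 1).re = π * (if x < α then 1 else 0) - π * α := by
  rw [sinZeta_one hx0 hx1]
  split_ifs with hlt
  · rw [← neg_sub α x, AddCircle.coe_neg, sinZeta_neg, sinZeta_one (by linarith) (by linarith)]
    simp only [Complex.neg_re, Complex.ofReal_re]
    ring
  · rw [sinZeta_one (sub_pos.2 (lt_of_le_of_ne (not_lt.1 hlt) hne.symm)) (by linarith)]
    simp only [Complex.ofReal_re]
    ring

lemma sum_val_lt_eq_sum_Icc_floor {N : ℕ} [NeZero N] {M : Type*} [AddCommMonoid M]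
    {f : ZMod N → M} (hf : f 0 = 0) {x : ℝ} (hx : x < N) (hne : ∀ k : ℕ, (k : ℝ) ≠ x) :
    ∑ a with (a.val : ℝ) < x, f a = ∑ n ∈ Icc 1 ⌊x⌋₊, f n := by
  have le_floor_iff (n : ℕ) (hn : n ≠ 0) : n ≤ ⌊x⌋₊ ↔ (n : ℝ) < x := by
    rw [Nat.le_floor_iff' hn, le_iff_lt_or_eq, or_iff_left (hne n)]
  have val_cast {n : ℕ} (hn : n ∈ Icc 1 ⌊x⌋₊) : (n : ZMod N).val = n := by
    have ⟨one_le, le_floor⟩ := mem_Icc.1 hn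
    exact ZMod.val_natCast_of_lt
      (mod_cast ((le_floor_iff n (by omega)).1 le_floor).trans hx)
  symm
  refine Finset.sum_of_injOn (fun n : ℕ ↦ (n : ZMod N)) (fun m hm n hn h ↦ ?_) (fun n hn ↦ ?_)
    (fun a ha h ↦ ?_) fun _ _ ↦ rfl
  · rw [← val_cast hm, ← val_cast hn, show (m : ZMod N) = n from h]
  · have ⟨one_le, le_floor⟩ := mem_Icc.1 (mem_coe.1 hn)
    rw [mem_coe, mem_filter_univ, val_cast hn]
    exact (le_floor_iff n (by omega)).1 le_floor
  · by_contra hfa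
    have val_ne : a.val ≠ 0 := (ZMod.val_ne_zero a).2 fun ha0 ↦ hfa (ha0 ▸ hf)
    refine h ⟨a.val, ?_, ZMod.natCast_zmod_val a⟩
    simpa [Nat.one_le_iff_ne_zero, val_ne] using (le_floor_iff a.val val_ne).2 (mem_filter.1 ha).2

lemma stdAddChar_natCast_mul {N : ℕ} [NeZero N] (n : ℕ) (a : ZMod N) :
    ZMod.stdAddChar ((n : ZMod N) * a) =
      Complex.exp ((2 * π * (a.val / N) * n : ℝ) * Complex.I) := by
  have cast_eq : (n * a : ZMod N) = ((n * a.val : ℤ) : ZMod N) := by simp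
  rw [cast_eq, ZMod.stdAddChar_coe]
  push_cast
  ring_nf

variable {p : ℕ} [Fact p.Prime]

lemma ofReal_legendreChar (a : ZMod p) : ((legendreChar p ℝ a : ℝ) : ℂ) = legendreChar p ℂ a := by
  simp only [legendreChar_apply, Complex.ofReal_intCast]

lemma sum_legendreChar_mul_sin_sub (hp : p % 4 = 3) (n : ℕ) (θ : ℝ) :
    ∑ a : ZMod p, legendreChar p ℝ a * Real.sin (2 * π * (a.val / p) * n - θ) =
      √p * (legendreChar p ℝ n * Real.cos θ) := by
  have I_pow : Complex.I ^ (p / 2) ^ 2 = Complex.I := by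
    obtain ⟨k, hk⟩ : ∃ k, p / 2 = 2 * k + 1 := ⟨p / 4, by omega⟩
    rw [hk, show (2 * k + 1) ^ 2 = 4 * (k ^ 2 + k) + 1 by ring, pow_succ, pow_mul,
      Complex.I_pow_four, one_pow, one_mul]
  have summand_eq (a : ZMod p) : legendreChar p ℝ a * Real.sin (2 * π * (a.val / p) * n - θ) =
      (legendreChar p ℂ a * ZMod.stdAddChar ((n : ZMod p) * a) *
        Complex.exp (-θ * Complex.I)).im := by
    rw [stdAddChar_natCast_mul, mul_assoc (legendreChar p ℂ a), ← Complex.exp_add,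
      ← ofReal_legendreChar, ← add_mul, ← Complex.ofReal_neg, ← Complex.ofReal_add,
      Complex.im_ofReal_mul, Complex.exp_ofReal_mul_I_im, sub_eq_add_neg]
  have := congrArg (fun z ↦ (z * Complex.exp (-θ * Complex.I)).im)
    (sum_legendreChar_mul_stdAddChar (show p ≠ 2 by omega) n)
  simp only [summand_eq, ← Complex.im_sum, ← Finset.sum_mul, this]
  have exp_eq : Complex.exp (-θ * Complex.I) = Real.cos θ - Real.sin θ * Complex.I := by
    rw [Complex.exp_mul_I, Complex.cos_neg, Complex.sin_neg]
    push_cast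
    ring
  rw [I_pow, ← ofReal_legendreChar, exp_eq]
  simp [Complex.cos_ofReal_re, mul_comm, mul_left_comm]

lemma hasSum_legendreChar_mul_cos_div_rpow (hp : p % 4 = 3) (α : ℝ) {s : ℝ} (hs : 1 < s) :
    HasSum (fun n : ℕ ↦ √p * (legendreChar p ℝ n * Real.cos (2 * π * α * n)) / (n : ℝ) ^ s)
      (∑ a : ZMod p, legendreChar p ℝ a * (sinZeta (a.val / p - α : ℝ) s).re) := by
  refine (hasSum_sum fun a _ ↦
    (hasSum_re_sinZeta (a.val / p - α) hs).mul_left (legendreChar p ℝ a)).congr_fun fun n ↦ ?_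
  rw [← sum_legendreChar_mul_sin_sub hp, Finset.sum_div]
  refine Finset.sum_congr rfl fun a _ ↦ ?_
  rw [mul_div_assoc]
  ring_nf

lemma sum_legendreChar_mul_sinZeta_one_sub (hp : p ≠ 2) {α : ℝ} (hα0 : 0 ≤ α) (hα1 : α < 1)
    (hne : ∀ k : ℕ, (k : ℝ) ≠ α * p) :
    ∑ a : ZMod p, legendreChar p ℝ a *
        ((sinZeta (a.val / p : ℝ) 1).re - (sinZeta (a.val / p - α : ℝ) 1).re) =
      π * ∑ n ∈ Icc 1 ⌊α * p⌋₊, legendreChar p ℝ n := by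
  have p_pos : (0 : ℝ) < p := mod_cast (Fact.out : p.Prime).pos
  have summand_eq (a : ZMod p) : legendreChar p ℝ a *
        ((sinZeta (a.val / p : ℝ) 1).re - (sinZeta (a.val / p - α : ℝ) 1).re) =
      π * (legendreChar p ℝ a * (if (a.val : ℝ) < α * p then 1 else 0)) -
        π * α * legendreChar p ℝ a := by
    rcases eq_or_ne a 0 with rfl | ha
    · simp [MulChar.map_zero]
    · have val_pos : (0 : ℝ) < a.val := mod_cast Nat.pos_of_ne_zero ((ZMod.val_ne_zero a).2 ha)
      have val_lt : (a.val : ℝ) < p := mod_cast a.val_lt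
      rw [sinZeta_one_sub_sinZeta_one (div_pos val_pos p_pos) ((div_lt_one p_pos).2 val_lt) hα0 hα1
        fun h ↦ hne a.val ((div_eq_iff p_pos.ne').1 h)]
      simp only [div_lt_iff₀ p_pos]
      ring
  have αp_lt : α * p < p := mul_lt_of_lt_one_left p_pos hα1
  rw [Finset.sum_congr rfl fun a _ ↦ summand_eq a, Finset.sum_sub_distrib, ← Finset.mul_sum,
    ← Finset.mul_sum, MulChar.sum_eq_zero_of_ne_one (legendreChar_ne_one ℝ hp), mul_zero,
    sub_zero]
  simp only [mul_ite, mul_one, mul_zero, ← Finset.sum_filter]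
  rw [sum_val_lt_eq_sum_Icc_floor (MulChar.map_zero _) αp_lt hne]

lemma sum_legendreSym_Icc_floor_nonneg (hp : p % 4 = 3) {α : ℝ} (hα0 : 0 ≤ α) (hα1 : α < 1)
    (hne : ∀ k : ℕ, (k : ℝ) ≠ α * p)
    (hpos : ∀ s : ℝ, 1 < s →
      0 ≤ ∑' n : ℕ, legendreChar p ℝ n * (1 - Real.cos (2 * π * α * n)) / (n : ℝ) ^ s) :
    0 ≤ ∑ n ∈ Icc 1 ⌊α * p⌋₊, legendreSym p n := by
  have dirichlet_nonneg (s : ℝ) (hs : 1 < s) : 0 ≤ ∑ a : ZMod p, legendreChar p ℝ a *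
      ((sinZeta (a.val / p : ℝ) s).re - (sinZeta (a.val / p - α : ℝ) s).re) := by
    have difference := (hasSum_legendreChar_mul_cos_div_rpow hp 0 hs).sub
      (hasSum_legendreChar_mul_cos_div_rpow hp α hs)
    simp only [sub_zero, ← Finset.sum_sub_distrib, ← mul_sub] at difference
    rw [← difference.tsum_eq]
    refine (mul_nonneg (Real.sqrt_nonneg p) (hpos s hs)).trans_eq ?_
    rw [← tsum_mul_left]
    refine tsum_congr fun n ↦ ?_
    rw [mul_zero, zero_mul, Real.cos_zero]
    ring
  have limit := tendsto_finsetSum Finset.univ fun (a : ZMod p) _ ↦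
    ((tendsto_re_sinZeta_one (a.val / p)).sub
      (tendsto_re_sinZeta_one (a.val / p - α))).const_mul (legendreChar p ℝ a)
  rw [sum_legendreChar_mul_sinZeta_one_sub (by omega) hα0 hα1 hne] at limit
  simp only [legendreChar_natCast, ← Int.cast_sum] at limit
  refine Int.cast_nonneg_iff.1 (nonneg_of_mul_nonneg_right (ge_of_tendsto limit ?_) Real.pi_pos)
  filter_upwards [self_mem_nhdsWithin] with s hs using dirichlet_nonneg s hs

end FourierCriterion

section EulerProduct

lemma tsum_nonneg_of_completely_multiplicative {f : ℕ →*₀ ℝ} (hf : Summable (‖f ·‖)) :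
    0 ≤ ∑' n, f n := by
  refine ge_of_tendsto' (EulerProduct.eulerProduct_completely_multiplicative hf) fun n ↦
    Finset.prod_nonneg fun q hq ↦ inv_nonneg.2 (sub_nonneg.2 ((le_abs_self _).trans ?_))
  exact (hf.of_norm.norm_lt_one (f := f.toMonoidHom)
    (Nat.prime_of_mem_primesBelow hq).one_lt).le

lemma summable_div_rpow_of_norm_le_one {f : ℕ → ℝ} (hf : ∀ n, ‖f n‖ ≤ 1) {s : ℝ} (hs : 1 < s) :
    Summable fun n : ℕ ↦ f n / (n : ℝ) ^ s := by
  refine .of_norm_bounded (Real.summable_one_div_nat_rpow.2 hs) fun n ↦ ?_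
  rw [norm_div, Real.norm_of_nonneg (Real.rpow_nonneg n.cast_nonneg s)]
  gcongr
  exact hf n

lemma tsum_div_rpow_nonneg {f : ℕ →*₀ ℝ} (hf : ∀ n, ‖f n‖ ≤ 1) {s : ℝ} (hs : 1 < s) :
    0 ≤ ∑' n : ℕ, f n / (n : ℝ) ^ s := by
  let F : ℕ →*₀ ℝ :=
    { toFun := fun n ↦ f n / (n : ℝ) ^ s
      map_zero' := by rw [map_zero, zero_div]
      map_one' := by rw [map_one, Nat.cast_one, Real.one_rpow, div_one]
      map_mul' := fun a b ↦ by
        rw [map_mul, Nat.cast_mul, Real.mul_rpow a.cast_nonneg b.cast_nonneg, mul_div_mul_comm] }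
  exact tsum_nonneg_of_completely_multiplicative (f := F)
    (summable_div_rpow_of_norm_le_one hf hs).norm

lemma monoidWithZeroHom_mul_apply {α β : Type*} [MulZeroOneClass α] [CommMonoidWithZero β]
    (f g : α →*₀ β) (a : α) : (f * g) a = f a * g a := rfl

variable (p : ℕ) [Fact p.Prime]

/-- The Legendre symbol `n ↦ (n/p)` as a completely multiplicative real function on `ℕ`. -/
noncomputable def legendreHom : ℕ →*₀ ℝ :=
  (legendreChar p ℝ).toMonoidWithZeroHom.comp (Nat.castRingHom (ZMod p)).toMonoidWithZeroHom

lemma legendreHom_apply (n : ℕ) : legendreHom p n = legendreChar p ℝ n := rfl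

lemma norm_legendreHom_le_one (n : ℕ) : ‖legendreHom p n‖ ≤ 1 := by
  rcases isQuadratic_legendreChar (p := p) ℝ n with h | h | h <;> simp [legendreHom_apply, h]

end EulerProduct

section ModFive

instance fact_prime_five : Fact (Nat.Prime 5) := ⟨Nat.prime_five⟩

lemma sum_cos_two_pi_div_mul {N : ℕ} [NeZero N] (n : ℕ) :
    ∑ a : ZMod N, Real.cos (2 * π * (a.val / N) * n) = if (n : ZMod N) = 0 then (N : ℝ) else 0 := by
  have := congrArg Complex.re (AddChar.sum_mulShift (n : ZMod N) (ZMod.isPrimitive_stdAddChar N))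
  simp only [mul_comm _ (n : ZMod N), stdAddChar_natCast_mul, Complex.re_sum,
    Complex.exp_ofReal_mul_I_re, ZMod.card] at this
  rw [this]
  split_ifs <;> simp

lemma sum_legendreChar_mul_cos {p : ℕ} [Fact p.Prime] (hp : p % 4 = 1) (n : ℕ) :
    ∑ a : ZMod p, legendreChar p ℝ a * Real.cos (2 * π * (a.val / p) * n) =
      √p * legendreChar p ℝ n := by
  have I_pow : Complex.I ^ (p / 2) ^ 2 = 1 := by
    obtain ⟨k, hk⟩ : ∃ k, p / 2 = 2 * k := ⟨p / 4, by omega⟩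
    rw [hk, mul_pow, pow_mul, show 2 ^ 2 = 4 from rfl, Complex.I_pow_four, one_pow]
  have := congrArg Complex.re (sum_legendreChar_mul_stdAddChar (show p ≠ 2 by omega) n)
  simp only [stdAddChar_natCast_mul, Complex.re_sum, ← ofReal_legendreChar, Complex.re_ofReal_mul,
    Complex.exp_ofReal_mul_I_re, I_pow, one_mul, Complex.ofReal_re] at this
  rw [this, mul_comm]

lemma ite_natCast_eq_zero_eq_one_sub_legendreHom_sq (p : ℕ) [Fact p.Prime] (n : ℕ) :
    (if (n : ZMod p) = 0 then 1 else 0 : ℝ) = 1 - legendreHom p n ^ 2 := by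
  rw [legendreHom_apply, legendreChar_apply]
  split_ifs with hn
  · simp [hn]
  · have : (quadraticChar (ZMod p) n : ℝ) ^ 2 = 1 := mod_cast quadraticChar_sq_one hn
    rw [this, sub_self]

lemma one_sub_cos_eq_legendreHom_five (n : ℕ) :
    1 - Real.cos (2 * π * (2 / 5) * n) =
      5 / 4 * legendreHom 5 n ^ 2 + √5 / 4 * legendreHom 5 n := by
  have sum_zmod_five (f : ZMod 5 → ℝ) : ∑ a, f a = f 0 + f 1 + f 2 + f 3 + f 4 :=
    Fin.sum_univ_five f
  have χ_values : quadraticChar (ZMod 5) 0 = 0 ∧ quadraticChar (ZMod 5) 1 = 1 ∧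
      quadraticChar (ZMod 5) 2 = -1 ∧ quadraticChar (ZMod 5) 3 = -1 ∧
      quadraticChar (ZMod 5) 4 = 1 := by decide
  have val_values : (0 : ZMod 5).val = 0 ∧ (1 : ZMod 5).val = 1 ∧ (2 : ZMod 5).val = 2 ∧
      (3 : ZMod 5).val = 3 ∧ (4 : ZMod 5).val = 4 := by decide
  have cos_three : Real.cos (2 * π * (3 / 5) * n) = Real.cos (2 * π * (2 / 5) * n) := by
    rw [← Real.cos_nat_mul_two_pi_sub _ n]
    ring_nf
  have cos_four : Real.cos (2 * π * (4 / 5) * n) = Real.cos (2 * π * (1 / 5) * n) := by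
    rw [← Real.cos_nat_mul_two_pi_sub _ n]
    ring_nf
  have principal := sum_cos_two_pi_div_mul (N := 5) n
  have quadratic := sum_legendreChar_mul_cos (p := 5) rfl n
  rw [← mul_boole, ite_natCast_eq_zero_eq_one_sub_legendreHom_sq] at principal
  rw [← legendreHom_apply] at quadratic
  simp only [sum_zmod_five, legendreChar_apply, χ_values, val_values] at principal quadratic
  norm_num [cos_three, cos_four] at principal quadratic
  linear_combination (quadratic - principal) / 4

lemma tsum_legendreChar_mul_one_sub_cos_nonneg (p : ℕ) [Fact p.Prime] {s : ℝ} (hs : 1 < s) :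
    0 ≤ ∑' n : ℕ, legendreChar p ℝ n * (1 - Real.cos (2 * π * (2 / 5) * n)) / (n : ℝ) ^ s := by
  have norm_mul_le (f : ℕ →*₀ ℝ) (hf : ∀ n, ‖f n‖ ≤ 1) (n : ℕ) : ‖(f * legendreHom 5) n‖ ≤ 1 := by
    rw [monoidWithZeroHom_mul_apply, norm_mul]
    exact mul_le_one₀ (hf n) (norm_nonneg _) (norm_legendreHom_le_one 5 n)
  have twist_le := norm_mul_le _ (norm_legendreHom_le_one p)
  have twist_sq_le := norm_mul_le _ twist_le
  have split (n : ℕ) :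
      legendreChar p ℝ n * (1 - Real.cos (2 * π * (2 / 5) * n)) / (n : ℝ) ^ s =
        5 / 4 * ((legendreHom p * legendreHom 5 * legendreHom 5) n / (n : ℝ) ^ s) +
          √5 / 4 * ((legendreHom p * legendreHom 5) n / (n : ℝ) ^ s) := by
    simp only [one_sub_cos_eq_legendreHom_five, monoidWithZeroHom_mul_apply, legendreHom_apply p]
    ring
  rw [tsum_congr split, ((summable_div_rpow_of_norm_le_one twist_sq_le hs).mul_left _).tsum_add
    ((summable_div_rpow_of_norm_le_one twist_le hs).mul_left _), tsum_mul_left, tsum_mul_left]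
  have := tsum_div_rpow_nonneg twist_le hs
  have := tsum_div_rpow_nonneg twist_sq_le hs
  positivity

end ModFive

/-- For every prime `p ≡ 3 (mod 4)`, the sum `∑_{n=1}^{⌊2p/5⌋} (n/p)` of
Legendre symbols is nonnegative. -/
theorem stmt_14 (p : ℕ) [Fact p.Prime] (hp : p % 4 = 3) :
    0 ≤ ∑ n ∈ Finset.Icc 1 (2 * p / 5), legendreSym p (n : ℤ) := by
  have floor_eq : ⌊(2 / 5 : ℝ) * p⌋₊ = 2 * p / 5 := by
    rw [← Nat.floor_div_eq_div (K := ℝ)]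
    push_cast
    ring_nf
  have not_integer (k : ℕ) : (k : ℝ) ≠ 2 / 5 * p := by
    intro h
    have five_mul : 5 * k = 2 * p := by
      rify
      linarith
    have five_dvd : 5 ∣ p := (Nat.Coprime.dvd_mul_left (by norm_num)).1 ⟨k, five_mul.symm⟩
    have := (Nat.prime_dvd_prime_iff_eq Nat.prime_five Fact.out).1 five_dvd
    omega
  rw [← floor_eq]
  exact sum_legendreSym_Icc_floor_nonneg hp (by norm_num) (by norm_num) not_integer fun s hs ↦
    tsum_legendreChar_mul_one_sub_cos_nonneg p hs
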